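/- arXiv:2005.13658 — 2 statements merged into one kernel-verified Lean document; each statement's English description precedes it below -/
import Mathlib

section
/- Let z ∈ ℂ² be a unit vector, let P be the orthogonal projection onto the orthogonal complement of z (i.e., P = I − |z⟩⟨z|), and let U be a unitary operator on ℂ². Then ∑_{n=0}^∞ ‖(PU)^n z‖² = 1 if Uz = z up to phase (z is an eigenvector of U), and ∑_{n=0}^∞ ‖(PU)^n z‖² = 2 otherwise. -/
/-!
Let `T = PU` and let `W` be the span of the orbit `z, U z, U² z, …`. As `U` is unitary,
`T T† = P = 1 - |z⟩⟨z|`, so `‖T† x‖² = ‖x‖² - |⟨z, x⟩|²`, and telescoping gives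
`∑_{n < N} |⟨Tⁿ z, y⟩|² = ‖y‖² - ‖T†ᴺ y‖²`. Summed over an orthonormal basis of `W`, this bounds
`∑ ‖Tⁿ z‖²` by `dim W`. Hence `Tⁿ z → 0`, which propagates to `Tⁿ → 0` on `W` and, `W` being
finite-dimensional, to `T†ⁿ → 0` on `W`. The remainder therefore vanishes and `∑ ‖Tⁿ z‖² = dim W`:
this is `1` if `z` is an eigenvector of `U`, and otherwise `2` when the whole space is a plane.
-/

open Filter Topology Module
open scoped InnerProductSpace

theorem apply_mem_of_leftInverse {K V : Type*} [DivisionRing K] [AddCommGroup V] [Module K V]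
    {W : Submodule K V} [FiniteDimensional K W] {f : V →ₗ[K] V} {g : V → V}
    (hg : Function.LeftInverse g f) (hW : ∀ x ∈ W, f x ∈ W) {x : V} (hx : x ∈ W) : g x ∈ W := by
  obtain ⟨y, hy, rfl⟩ := (LinearMap.injOn_iff_surjOn hW).1 hg.injective.injOn hx
  exact (hg y).symm ▸ hy

section InnerProductSpace

variable {𝕜 E ι : Type*} [RCLike 𝕜] [NormedAddCommGroup E] [InnerProductSpace 𝕜 E]

theorem sum_sq_norm_orthonormalBasis [Fintype ι] (b : OrthonormalBasis ι 𝕜 E) :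
    ∑ i, ‖b i‖ ^ 2 = finrank 𝕜 E := by
  simp [finrank_eq_card_basis b.toBasis]

variable {W : Submodule 𝕜 E}

theorem sum_sq_norm_inner_basis_of_mem [Fintype ι] (b : OrthonormalBasis ι 𝕜 W) {x : E}
    (hx : x ∈ W) : ∑ i, ‖⟪x, (b i : E)⟫_𝕜‖ ^ 2 = ‖x‖ ^ 2 :=
  b.sum_sq_norm_inner_left ⟨x, hx⟩

theorem tendsto_star_pow_apply_zero [CompleteSpace E] [FiniteDimensional 𝕜 W] {A : E →L[𝕜] E}
    (hW : ∀ x ∈ W, star A x ∈ W) (hA : ∀ x ∈ W, Tendsto (fun n : ℕ => (A ^ n) x) atTop (𝓝 0))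
    {y : E} (hy : y ∈ W) : Tendsto (fun n : ℕ => (star A ^ n) y) atTop (𝓝 0) := by
  let b := stdOrthonormalBasis 𝕜 W
  have mem (n : ℕ) : (star A ^ n) y ∈ W := by
    induction n with
    | zero => exact hy
    | succ n ih => rw [pow_succ']; exact hW _ ih
  have norm_sq (n : ℕ) : ‖(star A ^ n) y‖ ^ 2 = ∑ i, ‖⟪y, (A ^ n) (b i)⟫_𝕜‖ ^ 2 := by
    rw [← sum_sq_norm_inner_basis_of_mem b (mem n), ← star_pow,
      ContinuousLinearMap.star_eq_adjoint]
    simp only [ContinuousLinearMap.adjoint_inner_left]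
  have tendsto_sum : Tendsto (fun n : ℕ => ∑ i, ‖⟪y, (A ^ n) (b i)⟫_𝕜‖ ^ 2) atTop (𝓝 0) := by
    simpa using tendsto_finsetSum Finset.univ fun i _ =>
      ((tendsto_const_nhds.inner (hA _ (b i).2)).norm.pow 2 :
        Tendsto (fun n : ℕ => ‖⟪y, (A ^ n) (b i)⟫_𝕜‖ ^ 2) atTop _)
  rw [tendsto_zero_iff_norm_tendsto_zero]
  simpa only [← norm_sq, Real.sqrt_sq (norm_nonneg _), Real.sqrt_zero] using tendsto_sum.sqrt

theorem norm_sub_inner_smul_sq {z : E} (hz : ‖z‖ = 1) (x : E) :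
    ‖x - ⟪z, x⟫_𝕜 • z‖ ^ 2 = ‖x‖ ^ 2 - ‖⟪z, x⟫_𝕜‖ ^ 2 := by
  have pythagoras := Submodule.norm_sq_eq_add_norm_sq_starProjection x (𝕜 ∙ z)
  rw [Submodule.starProjection_orthogonal_val, Submodule.starProjection_unit_singleton 𝕜 hz,
    norm_smul, hz, mul_one] at pythagoras
  linarith

theorem norm_star_apply_of_mul_star_self_eq_one [CompleteSpace E] {U : E →L[𝕜] E}
    (hU : U * star U = 1) (x : E) : ‖star U x‖ = ‖x‖ := by
  refine (star U).norm_map_iff_adjoint_comp_self.2 ?_ x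
  rw [← ContinuousLinearMap.star_eq_adjoint, star_star]
  exact hU

end InnerProductSpace

section CyclicSubspace

variable {K V : Type*} [DivisionRing K] [AddCommGroup V] [Module K V]

/-- The smallest `f`-invariant subspace containing `z`, encoded as the span of the forward orbit
of `z`. For `f = U` its dimension is the value of `∑ ‖(PU)ⁿ z‖²`. -/
def cyclicSubspace (f : End K V) (z : V) : Submodule K V :=
  Submodule.span K (Set.range fun n : ℕ => (f ^ n) z)

variable {f : End K V} {z : V}

theorem mem_cyclicSubspace_self : z ∈ cyclicSubspace f z :=
  Submodule.subset_span ⟨0, rfl⟩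

theorem apply_mem_cyclicSubspace {x : V} (hx : x ∈ cyclicSubspace f z) :
    f x ∈ cyclicSubspace f z := by
  suffices cyclicSubspace f z ≤ (cyclicSubspace f z).comap f from this hx
  refine Submodule.span_le.2 ?_
  rintro _ ⟨n, rfl⟩
  exact Submodule.subset_span ⟨n + 1, by simp [pow_succ']⟩

theorem cyclicSubspace_le {S : Submodule K V} (hz : z ∈ S) (hS : ∀ x ∈ S, f x ∈ S) :
    cyclicSubspace f z ≤ S := by
  refine Submodule.span_le.2 ?_
  rintro _ ⟨n, rfl⟩
  induction n with
  | zero => exact hz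
  | succ n ih => simpa [pow_succ'] using hS _ ih

theorem span_singleton_le_cyclicSubspace : K ∙ z ≤ cyclicSubspace f z :=
  (Submodule.span_singleton_le_iff_mem _ _).2 mem_cyclicSubspace_self

theorem finrank_cyclicSubspace_eq_one (hz : z ≠ 0) (h : ∃ c : K, f z = c • z) :
    finrank K (cyclicSubspace f z) = 1 := by
  obtain ⟨c, hc⟩ := h
  have span_invariant : ∀ x ∈ K ∙ z, f x ∈ K ∙ z := fun x hx => by
    obtain ⟨a, rfl⟩ := Submodule.mem_span_singleton.1 hx
    exact Submodule.mem_span_singleton.2 ⟨a * c, by rw [map_smul, hc, smul_smul]⟩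
  have cyclic_eq : cyclicSubspace f z = K ∙ z :=
    (cyclicSubspace_le (Submodule.mem_span_singleton_self z) span_invariant).antisymm
      span_singleton_le_cyclicSubspace
  rw [cyclic_eq, finrank_span_singleton hz]

theorem one_lt_finrank_cyclicSubspace [FiniteDimensional K (cyclicSubspace f z)] (hz : z ≠ 0)
    (h : ¬ ∃ c : K, f z = c • z) : 1 < finrank K (cyclicSubspace f z) := by
  rw [← finrank_span_singleton (K := K) hz]
  refine Submodule.finrank_lt_finrank_of_lt (span_singleton_le_cyclicSubspace.lt_of_not_ge ?_)
  intro hle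
  obtain ⟨c, hc⟩ := Submodule.mem_span_singleton.1
    (hle (apply_mem_cyclicSubspace mem_cyclicSubspace_self))
  exact h ⟨c, hc.symm⟩

theorem finrank_cyclicSubspace_eq_two (hV : finrank K V = 2) (hz : z ≠ 0)
    (h : ¬ ∃ c : K, f z = c • z) : finrank K (cyclicSubspace f z) = 2 := by
  have : FiniteDimensional K V := .of_finrank_eq_succ hV
  exact le_antisymm (hV ▸ Submodule.finrank_le _) (one_lt_finrank_cyclicSubspace hz h)

end CyclicSubspace

section MonitoredStep

variable {𝕜 E : Type*} [RCLike 𝕜] [NormedAddCommGroup E] [InnerProductSpace 𝕜 E]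

/-- The operator `(1 - |z⟩⟨z|) U`: one step of the evolution `U`, followed, when `z` is a unit
vector, by projecting out the component along `z`. Its iterates at `z` are the vectors `(PU)ⁿ z`. -/
noncomputable def monitoredStep (U : E →L[𝕜] E) (z : E) : E →L[𝕜] E :=
  (1 - (innerSL 𝕜 z).smulRight z) * U

variable {U : E →L[𝕜] E} {z : E}

theorem monitoredStep_apply (x : E) : monitoredStep U z x = U x - ⟪z, U x⟫_𝕜 • z := by
  simp [monitoredStep]

theorem monitoredStep_pow_self_mem_cyclicSubspace (n : ℕ) :
    (monitoredStep U z ^ n) z ∈ cyclicSubspace (U : E →ₗ[𝕜] E) z := by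
  induction n with
  | zero => exact mem_cyclicSubspace_self
  | succ n ih =>
    rw [pow_succ', mul_apply_eq_comp, monitoredStep_apply]
    exact sub_mem (apply_mem_cyclicSubspace ih) (Submodule.smul_mem _ _ mem_cyclicSubspace_self)

theorem tendsto_monitoredStep_pow_apply_zero
    (h : Tendsto (fun n : ℕ => (monitoredStep U z ^ n) z) atTop (𝓝 0))
    {x : E} (hx : x ∈ cyclicSubspace (U : E →ₗ[𝕜] E) z) :
    Tendsto (fun n : ℕ => (monitoredStep U z ^ n) x) atTop (𝓝 0) := by
  let S : Submodule 𝕜 E :=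
    { carrier := {x | Tendsto (fun n : ℕ => (monitoredStep U z ^ n) x) atTop (𝓝 0)}
      zero_mem' := by simp
      add_mem' := fun hx hy => by simpa using hx.add hy
      smul_mem' := fun c _ hx => by
        simpa only [Set.mem_ofPred_eq, map_smul, smul_zero] using hx.const_smul c }
  refine cyclicSubspace_le (S := S) h (fun y hy => ?_) hx
  have step_mem : monitoredStep U z y ∈ S := by
    simpa [S, pow_succ] using (tendsto_add_atTop_iff_nat 1).2 hy
  have U_eq : U y = monitoredStep U z y + ⟪z, U y⟫_𝕜 • z := by simp [monitoredStep_apply]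
  exact U_eq ▸ S.add_mem step_mem (S.smul_mem _ h)

variable [CompleteSpace E]

theorem star_monitoredStep_apply (x : E) :
    star (monitoredStep U z) x = star U (x - ⟪z, x⟫_𝕜 • z) := by
  refine ext_inner_right 𝕜 fun y => ?_
  simp only [ContinuousLinearMap.star_eq_adjoint, ContinuousLinearMap.adjoint_inner_left,
    monitoredStep_apply, inner_sub_left, inner_sub_right, inner_smul_left, inner_smul_right,
    inner_conj_symm, mul_comm]

theorem norm_star_monitoredStep_sq (hz : ‖z‖ = 1) (hU : U * star U = 1) (x : E) :
    ‖star (monitoredStep U z) x‖ ^ 2 = ‖x‖ ^ 2 - ‖⟪z, x⟫_𝕜‖ ^ 2 := by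
  rw [star_monitoredStep_apply, norm_star_apply_of_mul_star_self_eq_one hU,
    norm_sub_inner_smul_sq hz]

theorem sum_range_norm_inner_monitoredStep_pow_sq (hz : ‖z‖ = 1) (hU : U * star U = 1)
    (y : E) (N : ℕ) :
    ∑ n ∈ Finset.range N, ‖⟪(monitoredStep U z ^ n) z, y⟫_𝕜‖ ^ 2 =
      ‖y‖ ^ 2 - ‖(star (monitoredStep U z) ^ N) y‖ ^ 2 := by
  set T := monitoredStep U z
  have summand_eq (n : ℕ) :
      ‖⟪(T ^ n) z, y⟫_𝕜‖ ^ 2 = ‖(star T ^ n) y‖ ^ 2 - ‖(star T ^ (n + 1)) y‖ ^ 2 := by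
    rw [pow_succ' (star T), mul_apply_eq_comp, norm_star_monitoredStep_sq hz hU, sub_sub_cancel,
      ← star_pow, ContinuousLinearMap.star_eq_adjoint, ContinuousLinearMap.adjoint_inner_right]
  simp only [summand_eq, Finset.sum_range_sub', pow_zero, one_apply_eq_self]

variable [FiniteDimensional 𝕜 (cyclicSubspace (U : E →ₗ[𝕜] E) z)]

theorem sum_range_norm_monitoredStep_pow_sq_le (hz : ‖z‖ = 1) (hU : U * star U = 1)
    (N : ℕ) : ∑ n ∈ Finset.range N, ‖(monitoredStep U z ^ n) z‖ ^ 2 ≤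
      finrank 𝕜 (cyclicSubspace (U : E →ₗ[𝕜] E) z) := by
  let b := stdOrthonormalBasis 𝕜 (cyclicSubspace (U : E →ₗ[𝕜] E) z)
  calc ∑ n ∈ Finset.range N, ‖(monitoredStep U z ^ n) z‖ ^ 2
      = ∑ i, ∑ n ∈ Finset.range N, ‖⟪(monitoredStep U z ^ n) z, (b i : E)⟫_𝕜‖ ^ 2 := by
        rw [Finset.sum_comm]
        simp only [sum_sq_norm_inner_basis_of_mem b (monitoredStep_pow_self_mem_cyclicSubspace _)]
    _ ≤ ∑ i, ‖(b i : E)‖ ^ 2 := by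
        gcongr with i
        rw [sum_range_norm_inner_monitoredStep_pow_sq hz hU]
        exact sub_le_self _ (sq_nonneg _)
    _ = finrank 𝕜 (cyclicSubspace (U : E →ₗ[𝕜] E) z) := sum_sq_norm_orthonormalBasis b

theorem tendsto_monitoredStep_pow_self_zero (hz : ‖z‖ = 1) (hU : U * star U = 1) :
    Tendsto (fun n : ℕ => (monitoredStep U z ^ n) z) atTop (𝓝 0) := by
  have summable_sq : Summable fun n : ℕ => ‖(monitoredStep U z ^ n) z‖ ^ 2 :=
    summable_of_sum_range_le (fun _ => sq_nonneg _) (sum_range_norm_monitoredStep_pow_sq_le hz hU)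
  rw [tendsto_zero_iff_norm_tendsto_zero]
  simpa using summable_sq.tendsto_atTop_zero.sqrt

theorem tendsto_star_monitoredStep_pow_zero (hz : ‖z‖ = 1) (hU : U ∈ unitary (E →L[𝕜] E))
    {y : E} (hy : y ∈ cyclicSubspace (U : E →ₗ[𝕜] E) z) :
    Tendsto (fun n : ℕ => (star (monitoredStep U z) ^ n) y) atTop (𝓝 0) := by
  have star_U_U : Function.LeftInverse ⇑(star U) (U : E →ₗ[𝕜] E) := DFunLike.congr_fun hU.1
  refine tendsto_star_pow_apply_zero (fun x hx => ?_) (fun x hx => ?_) hy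
  · rw [star_monitoredStep_apply]
    exact apply_mem_of_leftInverse star_U_U (fun _ => apply_mem_cyclicSubspace)
      (sub_mem hx (Submodule.smul_mem _ _ mem_cyclicSubspace_self))
  · exact tendsto_monitoredStep_pow_apply_zero (tendsto_monitoredStep_pow_self_zero hz hU.2) hx

theorem hasSum_norm_inner_monitoredStep_pow_sq (hz : ‖z‖ = 1) (hU : U ∈ unitary (E →L[𝕜] E))
    {y : E} (hy : y ∈ cyclicSubspace (U : E →ₗ[𝕜] E) z) :
    HasSum (fun n : ℕ => ‖⟪(monitoredStep U z ^ n) z, y⟫_𝕜‖ ^ 2) (‖y‖ ^ 2) := by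
  rw [hasSum_iff_tendsto_nat_of_nonneg fun _ => sq_nonneg _]
  simp only [sum_range_norm_inner_monitoredStep_pow_sq hz hU.2]
  simpa using ((tendsto_star_monitoredStep_pow_zero hz hU hy).norm.pow 2).const_sub (‖y‖ ^ 2)

end MonitoredStep

theorem sum_sq_norms_iterates_qubit_general {𝕜 E : Type*} [RCLike 𝕜] [NormedAddCommGroup E]
    [InnerProductSpace 𝕜 E] [CompleteSpace E] {z : E} (hz : ‖z‖ = 1) {U P : E →L[𝕜] E}
    [FiniteDimensional 𝕜 (cyclicSubspace (U : E →ₗ[𝕜] E) z)] (hU : U ∈ unitary (E →L[𝕜] E))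
    (hP : P = 1 - (innerSL 𝕜 z).smulRight z) :
    HasSum (fun n : ℕ => ‖((P * U) ^ n) z‖ ^ 2)
      (finrank 𝕜 (cyclicSubspace (U : E →ₗ[𝕜] E) z)) := by
  subst hP
  change HasSum (fun n : ℕ => ‖(monitoredStep U z ^ n) z‖ ^ 2) _
  let b := stdOrthonormalBasis 𝕜 (cyclicSubspace (U : E →ₗ[𝕜] E) z)
  have hasSum_basis := hasSum_sum (s := Finset.univ) fun i _ =>
    hasSum_norm_inner_monitoredStep_pow_sq hz hU (b i).2
  simpa only [sum_sq_norm_inner_basis_of_mem b (monitoredStep_pow_self_mem_cyclicSubspace _),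
    Submodule.norm_coe, sum_sq_norm_orthonormalBasis b] using hasSum_basis

/-- **qubit case.** For a unit vector `z ∈ ℂ²`, `P = I - |z⟩⟨z|`, and `U`
unitary, the series `∑_n ‖(PU)^n z‖²` equals `1` if `z` is an eigenvector of `U`
(`Uz = cz` for some phase `c`), and equals `2` otherwise. -/
theorem sum_sq_norms_iterates_qubit
    (z : EuclideanSpace ℂ (Fin 2)) (hz : ‖z‖ = 1)
    (U P : EuclideanSpace ℂ (Fin 2) →L[ℂ] EuclideanSpace ℂ (Fin 2))
    (hU : U ∈ unitary (EuclideanSpace ℂ (Fin 2) →L[ℂ] EuclideanSpace ℂ (Fin 2)))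
    (hP : P = 1 - (innerSL ℂ z).smulRight z) :
    ((∃ c : ℂ, U z = c • z) → ∑' n : ℕ, ‖((P * U) ^ n) z‖ ^ 2 = 1)
    ∧ ((¬ ∃ c : ℂ, U z = c • z) → ∑' n : ℕ, ‖((P * U) ^ n) z‖ ^ 2 = 2) := by
  have hz₀ : z ≠ 0 := norm_ne_zero_iff.1 (hz ▸ one_ne_zero)
  rw [(sum_sq_norms_iterates_qubit_general hz hU hP).tsum_eq]
  exact ⟨fun h => by simp [finrank_cyclicSubspace_eq_one hz₀ h],
    fun h => by simp [finrank_cyclicSubspace_eq_two finrank_euclideanSpace_fin hz₀ h]⟩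
end

section
/- Let R be an orthogonal operator on ℝ^2 given by rotation through an angle φ (under the identification of ℝ² with ℂ, Rw = e^{iφ}w), let z ∈ ℝ² be a unit vector and P the orthogonal projection onto the orthogonal complement of z. If φ is not a multiple of π, then ∑_{n=0}^∞ ‖(PR)^n z‖² = 2; if φ ∈ {0, π} (mod 2π) then ∑_{n=0}^∞ ‖(PR)^n z‖² = 1. -/
/-!
For a unit vector `z` the orthogonal complement of `z` is the line spanned by `I * z`, so the
compression `P ∘ R` is a rank-one operator `w ↦ ℓ w • (I * z)` with `ℓ z = sin φ` and
`ℓ (I * z) = cos φ`. Its iterates satisfy `(P ∘ R)^[n + 1] z = (sin φ * cos φ ^ n) • (I * z)`, and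
the geometric series gives `1 + sin² φ / (1 - cos² φ)`, unless `sin φ = 0`.
-/

section RankOne

theorem iterate_succ_smulRight_apply {S M : Type*} [Semiring S] [AddCommMonoid M] [Module S M]
    (ℓ : M →ₗ[S] S) (u z : M) (n : ℕ) :
    (ℓ.smulRight u)^[n + 1] z = (ℓ z * ℓ u ^ n) • u := by
  induction n with
  | zero => simp
  | succ n ih =>
    rw [Function.iterate_succ_apply', ih, LinearMap.smulRight_apply, map_smul, smul_eq_mul,
      mul_assoc, ← pow_succ]

variable {𝕜 E : Type*} [NormedField 𝕜] [SeminormedAddCommGroup E] [NormedSpace 𝕜 E]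

theorem sq_norm_iterate_succ_smulRight_apply (ℓ : E →ₗ[𝕜] 𝕜) (u z : E) (n : ℕ) :
    ‖(ℓ.smulRight u)^[n + 1] z‖ ^ 2 = (‖ℓ z‖ * ‖u‖) ^ 2 * (‖ℓ u‖ ^ 2) ^ n := by
  rw [iterate_succ_smulRight_apply, norm_smul, norm_mul, norm_pow]
  ring

theorem hasSum_sq_norm_iterate_smulRight {ℓ : E →ₗ[𝕜] 𝕜} {u : E} (hu : ‖ℓ u‖ < 1) (z : E) :
    HasSum (fun n : ℕ => ‖(ℓ.smulRight u)^[n] z‖ ^ 2)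
      (‖z‖ ^ 2 + (‖ℓ z‖ * ‖u‖) ^ 2 * (1 - ‖ℓ u‖ ^ 2)⁻¹) := by
  have tail : HasSum (fun n : ℕ => ‖(ℓ.smulRight u)^[n + 1] z‖ ^ 2)
      ((‖ℓ z‖ * ‖u‖) ^ 2 * (1 - ‖ℓ u‖ ^ 2)⁻¹) := by
    simp only [sq_norm_iterate_succ_smulRight_apply]
    exact (hasSum_geometric_of_lt_one (sq_nonneg _)
      (pow_lt_one₀ (norm_nonneg _) hu two_ne_zero)).mul_left _
  exact tail.zero_add

theorem hasSum_sq_norm_iterate_smulRight_of_apply_eq_zero {ℓ : E →ₗ[𝕜] 𝕜} {z : E} (hz : ℓ z = 0)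
    (u : E) : HasSum (fun n : ℕ => ‖(ℓ.smulRight u)^[n] z‖ ^ 2) (‖z‖ ^ 2) := by
  refine hasSum_single 0 fun n hn => ?_
  obtain ⟨n, rfl⟩ := Nat.exists_eq_succ_of_ne_zero hn
  rw [sq_norm_iterate_succ_smulRight_apply, hz]
  simp

end RankOne

section Compression

open scoped ComplexConjugate

theorem sub_re_conj_mul_smul_eq_im_smul {z : ℂ} (hz : ‖z‖ = 1) (w : ℂ) :
    w - (conj z * w).re • z = (conj z * w).im • (Complex.I * z) := by
  have expand : w = ((conj z * w).re + (conj z * w).im * Complex.I) * z := by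
    rw [Complex.re_add_im, mul_right_comm, Complex.conj_mul', hz]
    simp
  rw [Complex.real_smul, Complex.real_smul]
  linear_combination expand

/-- The coefficient functional of the compression of multiplication by `a` to the orthogonal
complement of `z`: when `‖z‖ = 1`, its value at `w` is the coordinate of the projection of
`a * w` along the unit vector `I * z`. -/
noncomputable def compressionCoeff (a z : ℂ) : ℂ →ₗ[ℝ] ℝ :=
  Complex.imLm ∘ₗ LinearMap.mulLeft ℝ (conj z * a)

theorem compressionCoeff_apply (a z w : ℂ) : compressionCoeff a z w = (conj z * (a * w)).im :=
  congrArg Complex.im (mul_assoc (conj z) a w)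

theorem compressionCoeff_self {z : ℂ} (hz : ‖z‖ = 1) (a : ℂ) : compressionCoeff a z z = a.im := by
  rw [compressionCoeff_apply, mul_left_comm, Complex.conj_mul', hz]
  simp

theorem compressionCoeff_I_mul {z : ℂ} (hz : ‖z‖ = 1) (a : ℂ) :
    compressionCoeff a z (Complex.I * z) = a.re := by
  rw [compressionCoeff_apply, mul_left_comm, mul_left_comm (conj z), Complex.conj_mul', hz]
  simp

theorem hasSum_sq_norm_iterate_compression_of_im_ne_zero {a z : ℂ} (ha : ‖a‖ = 1)
    (hz : ‖z‖ = 1) (him : a.im ≠ 0) :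
    HasSum (fun n : ℕ => ‖((compressionCoeff a z).smulRight (Complex.I * z))^[n] z‖ ^ 2) 2 := by
  have hre : |a.re| < 1 := ha ▸ Complex.abs_re_lt_norm.mpr him
  have pythagoras : 1 - a.re ^ 2 = a.im ^ 2 := by
    rw [← Complex.sq_norm_sub_sq_re, ha, one_pow]
  have series := hasSum_sq_norm_iterate_smulRight (ℓ := compressionCoeff a z)
    (u := Complex.I * z) (by rwa [compressionCoeff_I_mul hz]) z
  convert series using 1
  rw [compressionCoeff_self hz, compressionCoeff_I_mul hz, norm_mul, Complex.norm_I, hz,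
    Real.norm_eq_abs, Real.norm_eq_abs, mul_one, mul_one, sq_abs, sq_abs, pythagoras,
    mul_inv_cancel₀ (pow_ne_zero 2 him)]
  norm_num

theorem hasSum_sq_norm_iterate_compression_of_im_eq_zero {a z : ℂ} (hz : ‖z‖ = 1)
    (him : a.im = 0) :
    HasSum (fun n : ℕ => ‖((compressionCoeff a z).smulRight (Complex.I * z))^[n] z‖ ^ 2) 1 := by
  simpa only [hz, one_pow] using hasSum_sq_norm_iterate_smulRight_of_apply_eq_zero
    ((compressionCoeff_self hz a).trans him) (Complex.I * z)

end Compression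

/-- Identify `ℝ²` with `ℂ`. Let `R` be the rotation through angle `φ`
(`Rw = e^{iφ}w`), `z` a unit vector, and `P w = w − ⟨z,w⟩_ℝ z` the orthogonal projection onto
the orthogonal complement of `z`. If `φ` is not a multiple of `π`, then
`∑_n ‖(P∘R)^n z‖² = 2`; if `φ` is a multiple of `π`, the sum equals `1`. -/
theorem sum_sq_norms_iterates_rotation (φ : ℝ) (z : ℂ) (hz : ‖z‖ = 1)
    (R P : ℂ → ℂ)
    (hR : ∀ w, R w = Complex.exp (φ * Complex.I) * w)
    (hP : ∀ w, P w = w - ((starRingEnd ℂ) z * w).re • z) :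
    ((¬ ∃ m : ℤ, φ = m * Real.pi) → ∑' n : ℕ, ‖(P ∘ R)^[n] z‖ ^ 2 = 2)
    ∧ ((∃ m : ℤ, φ = m * Real.pi) → ∑' n : ℕ, ‖(P ∘ R)^[n] z‖ ^ 2 = 1) := by
  have compression : P ∘ R =
      (compressionCoeff (Complex.exp (φ * Complex.I)) z).smulRight (Complex.I * z) := by
    funext w
    rw [Function.comp_apply, hP, hR, sub_re_conj_mul_smul_eq_im_smul hz,
      LinearMap.smulRight_apply, compressionCoeff_apply]
  have multiple_of_pi_iff :
      (∃ m : ℤ, φ = m * Real.pi) ↔ (Complex.exp (φ * Complex.I)).im = 0 := by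
    rw [Complex.exp_ofReal_mul_I_im, Real.sin_eq_zero_iff]
    exact exists_congr fun _ => eq_comm
  rw [compression, multiple_of_pi_iff]
  exact ⟨fun him => (hasSum_sq_norm_iterate_compression_of_im_ne_zero
      (Complex.norm_exp_ofReal_mul_I φ) hz him).tsum_eq,
    fun him => (hasSum_sq_norm_iterate_compression_of_im_eq_zero hz him).tsum_eq⟩
end
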